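/- arXiv:1006.3247 — 2 statements merged into one kernel-verified Lean document; each statement's English description precedes it below -/
import Mathlib

section
/- Let n ≥ p ≥ 1 be integers, let U be a Haar-distributed random unitary matrix in U(n), and let (i_1,…,i_p), (i'_1,…,i'_p), (j_1,…,j_p), (j'_1,…,j'_p) be p-tuples of indices from {1,…,n}. Then E[U_{i_1 j_1}⋯U_{i_p j_p} · conj(U_{i'_1 j'_1})⋯conj(U_{i'_p j'_p})] = Σ_{σ,τ ∈ S_p} δ_{i_1, i'_{σ(1)}}⋯δ_{i_p, i'_{σ(p)}} · δ_{j_1, j'_{τ(1)}}⋯δ_{j_p, j'_{τ(p)}} · Wg(n, τσ^{-1}). -/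
open MeasureTheory Matrix Filter

noncomputable section

instance matMS (m n : Type*) : MeasurableSpace (Matrix m n ℂ) :=
  inferInstanceAs (MeasurableSpace (m → n → ℂ))

/-- number of cycles of a permutation, fixed points included -/
def ncycles {α : Type*} [Fintype α] [DecidableEq α] (σ : Equiv.Perm α) : ℕ :=
  Fintype.card α - σ.cycleType.sum + σ.cycleType.card

/-!
For fixed column indices `j, j'`, the moments are the entries of the matrix
`M = E[U^{⊗p} e_j (U^{⊗p} e_{j'})ᴴ]`. Left invariance of `μ` makes `M` commute with `V^{⊗p}` for
every unitary `V`, hence with `A^{⊗p}` for every matrix `A`, because both sides are polynomial in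
the entries of `A`. For `p ≤ n` there is a tensor `e_ε` with `p` distinct factors; it is cyclic for
the matrices `A^{⊗p}`, and comparing values on it gives `M = ∑ σ, c σ • P σ`, where the `P σ` are
the permutations of the tensor factors. The trace `tr (M * P τ⁻¹)` is the delta function comparing
`j` with `j' ∘ τ` and also equals `∑ σ, c σ * n ^ #(σ τ⁻¹)`, so convolving with `Wg` recovers `c`.
-/

open Equiv (Perm)

section Cycles

variable {α : Type*} [Fintype α] [DecidableEq α]

/-- The cycle of `σ` through `x`, where the cycle through a fixed point is recorded as that point
and a nontrivial cycle as the corresponding cyclic factor of `σ`. -/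
def cycleThrough (σ : Perm α) (x : α) : Function.fixedPoints σ ⊕ σ.cycleFactorsFinset :=
  if h : x ∈ Function.fixedPoints σ then Sum.inl ⟨x, h⟩
  else Sum.inr ⟨σ.cycleOf x, Perm.cycleOf_mem_cycleFactorsFinset_iff.2 (Perm.mem_support.2 h)⟩

lemma cycleThrough_eq_iff (σ : Perm α) (x y : α) :
    cycleThrough σ x = cycleThrough σ y ↔ σ.SameCycle x y := by
  by_cases hx : x ∈ Function.fixedPoints σ <;> by_cases hy : y ∈ Function.fixedPoints σ <;>
    simp only [cycleThrough, hx, hy, ↓reduceDIte, Sum.inl.injEq, Sum.inr.injEq, Subtype.mk.injEq,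
      reduceCtorEq, false_iff]
  · exact ⟨fun h => h ▸ Perm.SameCycle.refl σ x, fun h => h.eq_of_left hx⟩
  · exact fun h => hy (h.apply_eq_self_iff.1 hx)
  · exact fun h => hx (h.apply_eq_self_iff.2 hy)
  · exact (Perm.sameCycle_iff_cycleOf_eq_of_mem_support
      (Perm.mem_support.2 hx) (Perm.mem_support.2 hy)).symm

lemma cycleThrough_surjective (σ : Perm α) : Function.Surjective (cycleThrough σ) := by
  rintro (⟨x, hx⟩ | ⟨c, hc⟩)
  · exact ⟨x, dif_pos hx⟩
  · obtain ⟨x, hx⟩ := (Perm.mem_cycleFactorsFinset_iff.1 hc).1.nonempty_support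
    have hσx : σ x ≠ x := Perm.mem_support.1 (Perm.mem_cycleFactorsFinset_support_le hc hx)
    refine ⟨x, (dif_neg hσx).trans ?_⟩
    simp only [Perm.cycle_is_cycleOf hx hc]

lemma card_quotient_sameCycle (σ : Perm α) :
    Nat.card (Quotient (Perm.SameCycle.setoid σ)) = ncycles σ := by
  have hker : Perm.SameCycle.setoid σ = Setoid.ker (cycleThrough σ) :=
    Setoid.ext fun x y => (cycleThrough_eq_iff σ x y).symm
  rw [hker, Nat.card_congr (Setoid.quotientKerEquivOfSurjective _ (cycleThrough_surjective σ)),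
    Nat.card_sum, Nat.card_eq_fintype_card, Perm.card_fixedPoints, ncycles,
    Nat.card_eq_fintype_card, Fintype.card_coe, Perm.cycleType_def, Multiset.card_map,
    Finset.card_val]

end Cycles

section PermuteTuple

variable {α ι : Type*}

variable (α ι) in
/-- The action of the permutations of `α` on tuples indexed by `α`, by `i ↦ i ∘ σ⁻¹`. -/
def permuteTuple : Perm α →* Perm (α → ι) where
  toFun σ := σ.arrowCongr (Equiv.refl ι)
  map_one' := rfl
  map_mul' _ _ := rfl

lemma permuteTuple_apply (σ : Perm α) (i : α → ι) :
    permuteTuple α ι σ i = i ∘ σ.symm := rfl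

lemma eq_of_sameCycle_of_permuteTuple_eq {σ : Perm α} {i : α → ι}
    (hi : permuteTuple α ι σ i = i) {x y : α} (hxy : σ.SameCycle x y) : i x = i y := by
  obtain ⟨k, rfl⟩ := hxy
  have hk : permuteTuple α ι (σ ^ k) i = i := by
    rw [map_zpow]
    exact Perm.zpow_apply_eq_self_of_apply_eq_self hi k
  rw [permuteTuple_apply] at hk
  simpa only [Function.comp_apply, Equiv.symm_apply_apply] using congrFun hk ((σ ^ k) x)

variable (ι) in
/-- The tuples fixed by `σ`, viewed as functions on the set of cycles of `σ`; this is how the number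
of cycles enters the trace of a permutation of tensor factors. -/
def fixedPointsPermuteTupleEquiv (σ : Perm α) :
    Function.fixedPoints (permuteTuple α ι σ) ≃ (Quotient (Perm.SameCycle.setoid σ) → ι) where
  toFun i := Quotient.lift i.1 fun _ _ h => eq_of_sameCycle_of_permuteTuple_eq i.2 h
  invFun g := ⟨fun x => g (Quotient.mk _ x), funext fun x => congrArg g <|
    Quotient.sound (s := Perm.SameCycle.setoid σ) (Perm.sameCycle_symm_apply_left.2 (.refl σ x))⟩
  left_inv _ := rfl
  right_inv _ := funext <| Quotient.ind fun _ => rfl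

lemma ncard_fixedPoints_permuteTuple [Fintype α] [DecidableEq α] [Fintype ι] (σ : Perm α) :
    (Function.fixedPoints (permuteTuple α ι σ)).ncard = Fintype.card ι ^ ncycles σ := by
  rw [← Nat.card_coe_set_eq, Nat.card_congr (fixedPointsPermuteTupleEquiv ι σ), Nat.card_fun,
    card_quotient_sameCycle, Nat.card_eq_fintype_card]

end PermuteTuple

section KroneckerPow

variable {κ l m n ι R S : Type*} [Fintype κ] [CommSemiring R] [CommSemiring S]

variable (κ) in
/-- The tensor power `A^{⊗κ}` of a matrix, acting on tensors whose coordinates are indexed by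
tuples `κ → n`. -/
def kroneckerPow (A : Matrix m n R) : Matrix (κ → m) (κ → n) R :=
  of fun i j => ∏ a, A (i a) (j a)

lemma kroneckerPow_apply (A : Matrix m n R) (i : κ → m) (j : κ → n) :
    kroneckerPow κ A i j = ∏ a, A (i a) (j a) := rfl

lemma kroneckerPow_mul [DecidableEq κ] [Fintype m] (A : Matrix l m R) (B : Matrix m n R) :
    kroneckerPow κ (A * B) = kroneckerPow κ A * kroneckerPow κ B := by
  ext i j
  simp only [kroneckerPow_apply, mul_apply, ← Finset.prod_mul_distrib]
  rw [Finset.prod_univ_sum, Fintype.piFinset_univ]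

lemma kroneckerPow_diagonal [DecidableEq ι] (d : ι → R) :
    kroneckerPow κ (diagonal d) = diagonal fun i => ∏ a, d (i a) := by
  ext i j
  simp only [kroneckerPow_apply, diagonal_apply, Fintype.prod_ite_zero, funext_iff]

lemma kroneckerPow_map (f : R →+* S) (A : Matrix m n R) :
    (kroneckerPow κ A).map f = kroneckerPow κ (A.map f) := by
  ext i j
  simp only [map_apply, kroneckerPow_apply, map_prod]

variable (κ ι R) in
/-- The tensor power as a monoid homomorphism on square matrices. -/
def kroneckerPowHom [DecidableEq κ] [Fintype ι] [DecidableEq ι] :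
    Matrix ι ι R →* Matrix (κ → ι) (κ → ι) R where
  toFun := kroneckerPow κ
  map_one' := by simp only [← diagonal_one, kroneckerPow_diagonal, Finset.prod_const_one]
  map_mul' := kroneckerPow_mul

lemma kroneckerPow_continuous [TopologicalSpace R] [ContinuousMul R] :
    Continuous (kroneckerPow κ : Matrix m n R → Matrix (κ → m) (κ → n) R) :=
  continuous_matrix fun _ _ => continuous_finsetProd _ fun _ _ => continuous_id.matrix_elem _ _

end KroneckerPow

section TensorPerm

variable {κ ι R : Type*} [Fintype κ] [DecidableEq ι] [CommSemiring R]

variable (ι R) in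
/-- The matrix of the permutation of tensor factors `e_i ↦ e_{i ∘ σ}` in the standard basis. It is
antimultiplicative in `σ`. -/
def tensorPerm (σ : Perm κ) : Matrix (κ → ι) (κ → ι) R :=
  (permuteTuple κ ι σ).permMatrix R

lemma tensorPerm_apply (σ : Perm κ) (i j : κ → ι) [Decidable (∀ a, i a = j (σ a))] :
    tensorPerm ι R σ i j = if ∀ a, i a = j (σ a) then 1 else 0 := by
  have hij : i ∘ σ.symm = j ↔ ∀ a, i a = j (σ a) := by
    rw [Equiv.comp_symm_eq, funext_iff]
    rfl
  simp [tensorPerm, PEquiv.toMatrix_apply, permuteTuple_apply, hij]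

lemma tensorPerm_inv_apply (σ : Perm κ) (i j : κ → ι) :
    tensorPerm ι R σ⁻¹ i j = tensorPerm ι R σ j i := by
  simp only [tensorPerm_apply]
  exact if_congr ⟨fun h a => by simp [h], fun h a => by simp [h]⟩ rfl rfl

variable [DecidableEq κ] [Fintype ι]

lemma tensorPerm_mul (σ τ : Perm κ) :
    tensorPerm ι R σ * tensorPerm ι R τ = tensorPerm ι R (τ * σ) := by
  rw [tensorPerm, tensorPerm, tensorPerm, map_mul, permMatrix_mul]

lemma trace_tensorPerm (σ : Perm κ) :
    (tensorPerm ι R σ).trace = (Fintype.card ι : R) ^ ncycles σ := by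
  rw [tensorPerm, trace_permutation, ncard_fixedPoints_permuteTuple, Nat.cast_pow]

lemma tensorPerm_commute_kroneckerPow (σ : Perm κ) (A : Matrix ι ι R) :
    Commute (tensorPerm ι R σ) (kroneckerPow κ A) := by
  rw [commute_iff_eq, tensorPerm, PEquiv.toMatrix_toPEquiv_mul, PEquiv.mul_toMatrix_toPEquiv]
  ext i j
  simp only [submatrix_apply, kroneckerPow_apply, id_eq, permuteTuple_apply]
  exact Fintype.prod_equiv σ.symm _ _ fun a => by simp [permuteTuple, Equiv.arrowCongr]

end TensorPerm

section Commutant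

variable {κ ι R : Type*} [Fintype κ]

section CommSemiring

variable [CommSemiring R]

/-- The matrix of the linear map `e_{ε a} ↦ e_{k a}`, vanishing on the remaining basis vectors. -/
def basisTransport [DecidableEq ι] (ε : κ ↪ ι) (k : κ → ι) : Matrix ι ι R :=
  of fun x y => if ∃ a, ε a = y ∧ x = k a then 1 else 0

lemma kroneckerPow_basisTransport_apply [DecidableEq ι] (ε : κ ↪ ι) (k l : κ → ι) :
    kroneckerPow κ (basisTransport ε k : Matrix ι ι R) l ε = if l = k then 1 else 0 := by
  simp only [kroneckerPow_apply, basisTransport, of_apply, ε.injective.eq_iff, exists_eq_left,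
    Fintype.prod_ite_zero, Finset.prod_const_one, funext_iff]

variable [DecidableEq κ] [Fintype ι] {T S : Matrix (κ → ι) (κ → ι) R}

-- `e_ε` is a cyclic vector: every basis tensor `e_k` is the image of `e_ε` under some `A^{⊗κ}`.
lemma apply_eq_sum_col_of_commute_kroneckerPow [DecidableEq ι] (ε : κ ↪ ι)
    (hT : ∀ A : Matrix ι ι R, Commute T (kroneckerPow κ A)) (i k : κ → ι) :
    T i k = ∑ l, kroneckerPow κ (basisTransport ε k) i l * T l ε := by
  rw [← mul_apply, ← (hT _).eq, mul_apply]
  simp only [kroneckerPow_basisTransport_apply, mul_ite, mul_one, mul_zero, Finset.sum_ite_eq',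
    Finset.mem_univ, if_true]

lemma eq_of_commute_kroneckerPow_of_col_eq (ε : κ ↪ ι)
    (hT : ∀ A : Matrix ι ι R, Commute T (kroneckerPow κ A))
    (hS : ∀ A : Matrix ι ι R, Commute S (kroneckerPow κ A))
    (hcol : ∀ i, T i ε = S i ε) : T = S := by
  classical
  ext i k
  rw [apply_eq_sum_col_of_commute_kroneckerPow ε hT, apply_eq_sum_col_of_commute_kroneckerPow ε hS]
  simp only [hcol]

lemma exists_eq_comp_perm_of_apply_ne_zero (ε : κ ↪ ι)
    (hT : ∀ A : Matrix ι ι R, Commute T (kroneckerPow κ A)) {i : κ → ι} (hi : T i ε ≠ 0) :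
    ∃ σ : Perm κ, i = ε ∘ σ := by
  classical
  have mem_range : ∀ a, ∃ b, i b = ε a := by
    intro a
    by_contra! hb
    -- compare both sides of the commutation relation for the projection killing `e_{ε a}`
    have hcomm := congrFun₂ (hT (diagonal fun x => if x = ε a then 0 else 1)).eq i ε
    have prod_ε : ∏ b, (if ε b = ε a then (0 : R) else 1) = 0 :=
      Finset.prod_eq_zero (Finset.mem_univ a) (if_pos rfl)
    have prod_i : ∏ b, (if i b = ε a then (0 : R) else 1) = 1 :=
      Finset.prod_eq_one fun b _ => if_neg (hb b)
    rw [kroneckerPow_diagonal, mul_diagonal, diagonal_mul, prod_ε, prod_i, mul_zero,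
      one_mul] at hcomm
    exact hi hcomm.symm
  choose f hf using mem_range
  have hf_inj : Function.Injective f := fun a b hab => ε.injective (by rw [← hf, ← hf, hab])
  let e : Perm κ := Equiv.ofBijective f (Finite.injective_iff_bijective.1 hf_inj)
  refine ⟨e.symm, funext fun b => ?_⟩
  rw [Function.comp_apply, ← hf]
  exact congrArg i (e.apply_symm_apply b).symm

theorem eq_sum_tensorPerm_of_commute_kroneckerPow [DecidableEq ι] (ε : κ ↪ ι)
    (hT : ∀ A : Matrix ι ι R, Commute T (kroneckerPow κ A)) :
    T = ∑ σ : Perm κ, T (ε ∘ σ) ε • tensorPerm ι R σ := by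
  refine eq_of_commute_kroneckerPow_of_col_eq ε hT (fun A => Commute.sum_left _ _ _ fun σ _ =>
    (tensorPerm_commute_kroneckerPow σ A).smul_left _) fun i => ?_
  have apply_col : ∀ σ : Perm κ, tensorPerm ι R σ i ε = if i = ε ∘ σ then 1 else 0 := by
    simp only [tensorPerm_apply, funext_iff, Function.comp_apply, implies_true]
  simp only [Matrix.sum_apply, Matrix.smul_apply, apply_col, smul_eq_mul, mul_ite, mul_one,
    mul_zero]
  by_cases hi : ∃ σ : Perm κ, i = ε ∘ σ
  · obtain ⟨σ, rfl⟩ := hi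
    simp [ε.injective.comp_left.eq_iff, DFunLike.coe_injective.eq_iff]
  · rw [Finset.sum_eq_zero fun σ _ => if_neg fun h => hi ⟨σ, h⟩]
    exact not_not.1 fun h => hi (exists_eq_comp_perm_of_apply_ne_zero ε hT h)

end CommSemiring

section Density

variable [DecidableEq κ] [Fintype ι] [CommRing R] [IsDomain R]
  {T : Matrix (κ → ι) (κ → ι) R} {s : Set R}

lemma commute_kroneckerPow_diagonal_of_infinite [DecidableEq ι] (hs : s.Infinite)
    (hT : ∀ d : ι → R, (∀ x, d x ∈ s) → Commute T (kroneckerPow κ (diagonal d))) (d : ι → R) :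
    Commute T (kroneckerPow κ (diagonal d)) := by
  ext i k
  have hpoly : MvPolynomial.C (T i k) * ∏ a, MvPolynomial.X (k a) =
      (∏ a, MvPolynomial.X (i a)) * MvPolynomial.C (T i k) := by
    refine MvPolynomial.funext_set (fun _ => s) (fun _ => hs) fun x hx => ?_
    have hcomm := congrFun₂ (hT x fun y => hx y (Set.mem_univ y)).eq i k
    rw [kroneckerPow_diagonal, mul_diagonal, diagonal_mul] at hcomm
    simpa only [map_mul, map_prod, MvPolynomial.eval_C, MvPolynomial.eval_X] using hcomm
  rw [kroneckerPow_diagonal, mul_diagonal, diagonal_mul]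
  simpa only [map_mul, map_prod, MvPolynomial.eval_C, MvPolynomial.eval_X] using
    congrArg (MvPolynomial.eval d) hpoly

lemma commute_kroneckerPow_add_smul_of_infinite (hs : s.Infinite) (A B : Matrix ι ι R)
    (hT : ∀ t ∈ s, Commute T (kroneckerPow κ (A + t • B))) (t : R) :
    Commute T (kroneckerPow κ (A + t • B)) := by
  let L : Matrix ι ι (Polynomial R) :=
    A.map Polynomial.C + (Polynomial.X : Polynomial R) • B.map Polynomial.C
  have map_L : ∀ u, (kroneckerPow κ L).map (Polynomial.evalRingHom u) =
      kroneckerPow κ (A + u • B) := by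
    intro u
    rw [kroneckerPow_map]
    congr 1
    ext x y
    simp [L, mul_comm u]
  have map_T : ∀ u, (T.map Polynomial.C).map (Polynomial.evalRingHom u) = T := by
    intro u
    ext i k
    simp
  have hL : T.map Polynomial.C * kroneckerPow κ L = kroneckerPow κ L * T.map Polynomial.C := by
    ext1 i k
    refine Polynomial.eq_of_infinite_eval_eq _ _ (hs.mono fun u hu => ?_)
    have hcomm := (hT u hu).eq
    rw [← map_L, ← map_T u, ← Matrix.map_mul, ← Matrix.map_mul] at hcomm
    exact congrFun₂ hcomm i k
  have hmap := congrArg (Matrix.map · (Polynomial.evalRingHom t)) hL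
  simpa only [commute_iff_eq, Matrix.map_mul, map_L, map_T] using hmap

end Density

section Unitary

variable [DecidableEq κ] [Fintype ι] [DecidableEq ι] {T : Matrix (κ → ι) (κ → ι) ℂ}

lemma diagonal_mem_unitaryGroup {𝕜 : Type*} [RCLike 𝕜] {d : ι → 𝕜} (hd : ∀ x, ‖d x‖ = 1) :
    diagonal d ∈ unitaryGroup ι 𝕜 := by
  rw [mem_unitaryGroup_iff, star_eq_conjTranspose, diagonal_conjTranspose, diagonal_mul_diagonal,
    ← diagonal_one]
  congr 1 with x
  simp [RCLike.mul_conj, hd x]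

lemma infinite_setOf_norm_eq_one : {z : ℂ | ‖z‖ = 1}.Infinite := by
  have hcircle : Infinite Circle :=
    Circle.argEquiv.infinite_iff.2 (Set.Ioc_infinite (by linarith [Real.pi_pos])).to_subtype
  have hrange := Set.infinite_range_of_injective (f := fun z : Circle => (z : ℂ))
    Circle.coe_injective
  exact hrange.mono (Set.range_subset_iff.2 Circle.norm_coe)

lemma commute_kroneckerPow_of_isHermitian
    (hT : ∀ V ∈ unitaryGroup ι ℂ, Commute T (kroneckerPow κ V)) {A : Matrix ι ι ℂ}
    (hA : A.IsHermitian) : Commute T (kroneckerPow κ A) := by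
  have hdiag := commute_kroneckerPow_diagonal_of_infinite infinite_setOf_norm_eq_one
    fun d hd => hT _ (diagonal_mem_unitaryGroup hd)
  rw [hA.spectral_theorem, Unitary.conjStarAlgAut_apply, kroneckerPow_mul, kroneckerPow_mul]
  exact ((hT _ hA.eigenvectorUnitary.2).mul_right (hdiag _)).mul_right
    (hT _ (star hA.eigenvectorUnitary).2)

theorem commute_kroneckerPow_of_unitary
    (hT : ∀ V ∈ unitaryGroup ι ℂ, Commute T (kroneckerPow κ V)) (A : Matrix ι ι ℂ) :
    Commute T (kroneckerPow κ A) := by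
  rw [← realPart_add_I_smul_imaginaryPart A]
  refine commute_kroneckerPow_add_smul_of_infinite
    (Set.infinite_range_of_injective Complex.ofReal_injective) _ _ ?_ _
  rintro _ ⟨t, rfl⟩
  refine commute_kroneckerPow_of_isHermitian hT (IsSelfAdjoint.add (realPart A).2 ?_)
  exact IsSelfAdjoint.smul (Complex.conj_ofReal t) (imaginaryPart A).2

end Unitary

end Commutant

section GroupAverage

open scoped Matrix.Norms.L2Operator

variable {G N : Type*} [Group G] [MeasurableSpace G] [Fintype N] [DecidableEq N]

/-- The average `∫ π(g) X π(g)⁻¹ dμ(g)` of a matrix over a representation. The integral is taken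
with respect to the operator norm. -/
def groupAverage (μ : Measure G) (π : G →* Matrix N N ℂ) (X : Matrix N N ℂ) : Matrix N N ℂ :=
  ∫ g, π g * X * π g⁻¹ ∂μ

variable [TopologicalSpace G] [IsTopologicalGroup G] [CompactSpace G] [BorelSpace G]
  {μ : Measure G} {π : G →* Matrix N N ℂ}

lemma integrable_conj [IsFiniteMeasureOnCompacts μ] (hπ : Continuous π) (X : Matrix N N ℂ) :
    Integrable (fun g => π g * X * π g⁻¹) μ :=
  Continuous.integrable_of_hasCompactSupport (by fun_prop) (.of_compactSpace _)

lemma linearMap_groupAverage [IsFiniteMeasureOnCompacts μ] (hπ : Continuous π)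
    (L : Matrix N N ℂ →ₗ[ℂ] ℂ) (X : Matrix N N ℂ) :
    L (groupAverage μ π X) = ∫ g, L (π g * X * π g⁻¹) ∂μ :=
  (L.toContinuousLinearMap.integral_comp_comm (integrable_conj hπ X)).symm

theorem groupAverage_commute [IsFiniteMeasureOnCompacts μ] [μ.IsMulLeftInvariant]
    (hπ : Continuous π) (X : Matrix N N ℂ) (h : G) : Commute (groupAverage μ π X) (π h) := by
  have conj_eq : π h * groupAverage μ π X * π h⁻¹ = groupAverage μ π X :=
    calc π h * groupAverage μ π X * π h⁻¹
      _ = ∫ g, π h * (π g * X * π g⁻¹) * π h⁻¹ ∂μ := by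
        rw [groupAverage, integral_mul_const_of_integrable ((integrable_conj hπ X).const_mul _),
          integral_const_mul_of_integrable (integrable_conj hπ X)]
      _ = ∫ g, π (h * g) * X * π (h * g)⁻¹ ∂μ := by
        simp only [_root_.mul_inv_rev, map_mul, Matrix.mul_assoc]
      _ = groupAverage μ π X := integral_mul_left_eq_self (fun g => π g * X * π g⁻¹) h
  rw [commute_iff_eq]
  nth_rw 1 [← conj_eq]
  rw [Matrix.mul_assoc, ← map_mul, inv_mul_cancel, map_one, Matrix.mul_one]

theorem trace_groupAverage_mul_of_commute [IsProbabilityMeasure μ] (hπ : Continuous π)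
    {P : Matrix N N ℂ} (hP : ∀ g, Commute P (π g)) (X : Matrix N N ℂ) :
    (groupAverage μ π X * P).trace = (X * P).trace := by
  have trace_conj : ∀ g, (π g * X * π g⁻¹ * P).trace = (X * P).trace := by
    intro g
    rw [Matrix.mul_assoc, ← (hP g⁻¹).eq, Matrix.mul_assoc (π g), Matrix.trace_mul_comm,
      ← Matrix.mul_assoc X, Matrix.mul_assoc, ← map_mul, inv_mul_cancel, map_one, Matrix.mul_one]
  have trace_eq := linearMap_groupAverage (μ := μ) hπ
    (Matrix.traceLinearMap N ℂ ℂ ∘ₗ LinearMap.mulRight ℂ P) X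
  simpa [trace_conj] using trace_eq

end GroupAverage

section UnitaryGroup

variable {κ ι : Type*} [Fintype κ] [DecidableEq κ] [Fintype ι] [DecidableEq ι]

instance borelSpace_matrix (m n : Type*) [Countable m] [Countable n] :
    BorelSpace (Matrix m n ℂ) :=
  inferInstanceAs (BorelSpace (m → n → ℂ))

instance compactSpace_unitaryGroup : CompactSpace (unitaryGroup ι ℂ) := by
  have isCompact_entries : IsCompact {A : Matrix ι ι ℂ | ∀ x y, A x y ∈ Metric.closedBall 0 1} :=
    isCompact_pi_infinite fun _ => isCompact_pi_infinite fun _ => isCompact_closedBall 0 1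
  exact isCompact_iff_compactSpace.1 <| isCompact_entries.of_isClosed_subset isClosed_unitary
    fun U hU x y => mem_closedBall_zero_iff.2 (entry_norm_bound_of_unitary hU x y)

variable (κ ι) in
/-- The representation `U ↦ U^{⊗κ}` of the unitary group. -/
def unitaryTensorRep : unitaryGroup ι ℂ →* Matrix (κ → ι) (κ → ι) ℂ :=
  (kroneckerPowHom κ ι ℂ).comp (unitaryGroup ι ℂ).subtype

lemma unitaryTensorRep_apply (U : unitaryGroup ι ℂ) :
    unitaryTensorRep κ ι U = kroneckerPow κ (U : Matrix ι ι ℂ) := rfl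

lemma continuous_unitaryTensorRep : Continuous (unitaryTensorRep κ ι) :=
  kroneckerPow_continuous.comp continuous_subtype_val

variable (μ : Measure (unitaryGroup ι ℂ))

/-- The matrix `E[U^{⊗κ} e_j (U^{⊗κ} e_{j'})ᴴ]`, whose entries are the mixed moments of `U` with
column indices `j` and `j'`. -/
def momentMatrix (j j' : κ → ι) : Matrix (κ → ι) (κ → ι) ℂ :=
  groupAverage μ (unitaryTensorRep κ ι) (single j j' 1)

lemma momentMatrix_apply [IsFiniteMeasureOnCompacts μ] (i i' j j' : κ → ι) :
    momentMatrix μ j j' i i' = ∫ U, (∏ a, (U : Matrix ι ι ℂ) (i a) (j a)) *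
      ∏ a, starRingEnd ℂ ((U : Matrix ι ι ℂ) (i' a) (j' a)) ∂μ := by
  have entry_eq := linearMap_groupAverage (μ := μ) continuous_unitaryTensorRep
    (entryLinearMap ℂ ℂ i i') (single j j' 1)
  refine entry_eq.trans (integral_congr_ae (.of_forall fun U => ?_))
  simp [unitaryTensorRep_apply, mul_apply, single_apply, kroneckerPow_apply, ite_and]

lemma momentMatrix_commute_kroneckerPow [IsFiniteMeasureOnCompacts μ] [μ.IsMulLeftInvariant]
    (j j' : κ → ι) (A : Matrix ι ι ℂ) :
    Commute (momentMatrix μ j j') (kroneckerPow κ A) :=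
  commute_kroneckerPow_of_unitary (fun V hV =>
    groupAverage_commute continuous_unitaryTensorRep (single j j' 1) ⟨V, hV⟩) A

lemma trace_momentMatrix_mul_tensorPerm [IsProbabilityMeasure μ] (j j' : κ → ι) (σ : Perm κ) :
    (momentMatrix μ j j' * tensorPerm ι ℂ σ).trace = tensorPerm ι ℂ σ j' j := by
  rw [momentMatrix, trace_groupAverage_mul_of_commute continuous_unitaryTensorRep fun U =>
    tensorPerm_commute_kroneckerPow σ _, trace_single_mul, one_smul]

end UnitaryGroup

section Weingarten

lemma sum_sum_mul_eq_of_convolution_eq_one {G R : Type*} [Group G] [Fintype G] [DecidableEq G]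
    [CommSemiring R] {f g : G → R} (hfg : ∀ x, ∑ y, f y * g (x * y⁻¹) = if x = 1 then 1 else 0)
    (c : G → R) (x : G) : ∑ y, (∑ z, c z * g (z * y⁻¹)) * f (y * x⁻¹) = c x := by
  have hδ : ∀ z, ∑ y, f (y * x⁻¹) * g (z * y⁻¹) = if z = x then 1 else 0 := by
    intro z
    have hzx := hfg (z * x⁻¹)
    rw [← Equiv.sum_comp (Equiv.mulRight x⁻¹)] at hzx
    simpa [mul_inv_eq_one, mul_assoc] using hzx
  calc ∑ y, (∑ z, c z * g (z * y⁻¹)) * f (y * x⁻¹)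
    _ = ∑ z, c z * ∑ y, f (y * x⁻¹) * g (z * y⁻¹) := by
      simp only [Finset.sum_mul, Finset.mul_sum]
      rw [Finset.sum_comm]
      exact Finset.sum_congr rfl fun z _ => Finset.sum_congr rfl fun y _ => by ring
    _ = c x := by simp [hδ]

variable {κ ι : Type*} [Fintype κ] [DecidableEq κ] [Fintype ι] [DecidableEq ι]

theorem eq_sum_trace_smul_tensorPerm_of_commute {R : Type*} [CommSemiring R]
    (hcard : Fintype.card κ ≤ Fintype.card ι) {Wg : Perm κ → R}
    (hWg : ∀ σ : Perm κ, ∑ τ : Perm κ, Wg τ * (Fintype.card ι : R) ^ ncycles (σ * τ⁻¹) =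
      if σ = 1 then 1 else 0)
    {T : Matrix (κ → ι) (κ → ι) R} (hT : ∀ A : Matrix ι ι R, Commute T (kroneckerPow κ A)) :
    T = ∑ σ : Perm κ,
      (∑ τ : Perm κ, (T * tensorPerm ι R τ⁻¹).trace * Wg (τ * σ⁻¹)) • tensorPerm ι R σ := by
  obtain ⟨ε⟩ := Function.Embedding.nonempty_of_card_le hcard
  obtain ⟨c, hc⟩ : ∃ c : Perm κ → R, T = ∑ σ, c σ • tensorPerm ι R σ :=
    ⟨_, eq_sum_tensorPerm_of_commute_kroneckerPow ε hT⟩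
  have trace_eq : ∀ τ : Perm κ, (T * tensorPerm ι R τ⁻¹).trace =
      ∑ σ, c σ * (Fintype.card ι : R) ^ ncycles (σ * τ⁻¹) := by
    intro τ
    rw [trace_mul_comm, hc]
    simp only [Matrix.mul_sum, Matrix.mul_smul, trace_sum, trace_smul, tensorPerm_mul,
      trace_tensorPerm, smul_eq_mul]
  have coeff_eq : ∀ σ, ∑ τ : Perm κ, (T * tensorPerm ι R τ⁻¹).trace * Wg (τ * σ⁻¹) = c σ := by
    simp only [trace_eq]
    exact sum_sum_mul_eq_of_convolution_eq_one
      (g := fun σ => (Fintype.card ι : R) ^ ncycles σ) hWg c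
  simp only [coeff_eq]
  exact hc

end Weingarten

/-- **Weingarten formula.** For `n ≥ p ≥ 1`, a Haar-distributed unitary `U ∈ U(n)`
(`μ` is a left-invariant Borel probability measure on the unitary group) and the
Weingarten function `Wg` (characterized as the convolution inverse of `σ ↦ n^{#σ}`
in the group algebra of `S_p`), the expectation of a product of `p` entries of `U`
and `p` conjugated entries of `U` is given by a sum over pairs of permutations. -/
theorem weingarten_formula (n p : ℕ) (hp : 1 ≤ p) (hpn : p ≤ n)
    (μ : Measure (Matrix.unitaryGroup (Fin n) ℂ)) [IsProbabilityMeasure μ]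
    (hinv : ∀ V : Matrix.unitaryGroup (Fin n) ℂ, μ.map (fun W => V * W) = μ)
    (Wg : Equiv.Perm (Fin p) → ℝ)
    (hWg : ∀ σ : Equiv.Perm (Fin p),
      ∑ τ : Equiv.Perm (Fin p), Wg τ * (n : ℝ) ^ ncycles (σ * τ⁻¹) =
        if σ = 1 then 1 else 0)
    (i i' j j' : Fin p → Fin n) :
    ∫ U, (∏ a, (U : Matrix (Fin n) (Fin n) ℂ) (i a) (j a)) *
        ∏ a, (starRingEnd ℂ) ((U : Matrix (Fin n) (Fin n) ℂ) (i' a) (j' a)) ∂μ =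
      ∑ σ : Equiv.Perm (Fin p), ∑ τ : Equiv.Perm (Fin p),
        (if ∀ a, i a = i' (σ a) then (1 : ℂ) else 0) *
          (if ∀ a, j a = j' (τ a) then (1 : ℂ) else 0) *
          ((Wg (τ * σ⁻¹) : ℝ) : ℂ) := by
  have : μ.IsMulLeftInvariant := ⟨hinv⟩
  have hWg_complex : ∀ σ : Perm (Fin p), ∑ τ : Perm (Fin p),
      (Wg τ : ℂ) * (Fintype.card (Fin n) : ℂ) ^ ncycles (σ * τ⁻¹) = if σ = 1 then 1 else 0 := by
    intro σ
    simpa [apply_ite] using congrArg Complex.ofReal (hWg σ)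
  have trace_eq : ∀ τ : Perm (Fin p), (momentMatrix μ j j' * tensorPerm (Fin n) ℂ τ⁻¹).trace =
      if ∀ a, j a = j' (τ a) then 1 else 0 := by
    intro τ
    rw [trace_momentMatrix_mul_tensorPerm, tensorPerm_inv_apply, tensorPerm_apply]
  rw [← momentMatrix_apply, eq_sum_trace_smul_tensorPerm_of_commute (by simpa using hpn)
    hWg_complex (momentMatrix_commute_kroneckerPow μ j j'), Matrix.sum_apply]
  refine Finset.sum_congr rfl fun σ _ => ?_
  rw [Matrix.smul_apply, smul_eq_mul, tensorPerm_apply, Finset.sum_mul]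
  exact Finset.sum_congr rfl fun τ _ => by rw [trace_eq]; ring
end
end

section
/- Let d ≥ 1 and n ≥ d be integers. Then the Weingarten function evaluated at the full cycle (1,2,…,d) ∈ S_d satisfies Wg(n,(1,…,d)) = (−1)^{d−1} · c_{d−1} · Π_{j=−(d−1)}^{d−1} (n−j)^{−1}, where c_i = (2i)!/((i+1)!·i!) is the i-th Catalan number. -/
open Matrix Filter

noncomputable section

/-!
In the group algebra of the symmetric group on `d` points, the Weingarten function is the inverse
`W` of the central element `C = ∑ n ^ #σ σ`. Adding the points one at a time writes `C` as a product
of factors `n + J`, with `J` running over the Jucys–Murphy elements, so `C` multiplies the Young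
symmetrizer of a hook with leg `r` and arm `s`, `r + s = d - 1`, by the product
`(n + s)(n + s - 1) ⋯ (n - r)` over the contents of the hook; the coefficient of the identity in `W`
times the symmetrizer is the inverse of that product. On the other hand, characters vanish on a full
cycle except for hooks, which here takes the form that every trace takes the same value on the
alternating sum of the hook symmetrizers as on `d!` times a full cycle. So `d! * Wg(full cycle)` is
an alternating sum of inverses of products of contents, which Chu–Vandermonde evaluates.
-/

open Equiv Finset MonoidAlgebra
open Equiv.Perm hiding Disjoint
open scoped MonoidAlgebra

section CycleCount

variable {α : Type*} [Fintype α] [DecidableEq α] {σ τ : Perm α} {i k : α}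

lemma sum_cycleType_le_card (σ : Perm α) : σ.cycleType.sum ≤ Fintype.card α :=
  (sum_cycleType σ).trans_le (card_le_univ _)

lemma ncycles_one : ncycles (1 : Perm α) = Fintype.card α := by
  simp [ncycles]

lemma ncycles_inv (σ : Perm α) : ncycles σ⁻¹ = ncycles σ := by
  simp [ncycles]

lemma ncycles_conj (σ τ : Perm α) : ncycles (σ * τ * σ⁻¹) = ncycles τ := by
  simp [ncycles, cycleType_conj]

lemma ncycles_mul_comm (σ τ : Perm α) : ncycles (σ * τ) = ncycles (τ * σ) := by
  simpa [mul_assoc] using ncycles_conj σ (τ * σ)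

lemma ncycles_mul_add_card (h : Perm.Disjoint σ τ) :
    ncycles (σ * τ) + Fintype.card α = ncycles σ + ncycles τ := by
  have hle := sum_cycleType_le_card (σ * τ)
  rw [h.cycleType_mul, Multiset.sum_add] at hle
  simp only [ncycles, h.cycleType_mul, Multiset.sum_add, Multiset.card_add]
  omega

lemma ncycles_add_card_support (h : σ.IsCycle) :
    ncycles σ + #σ.support = Fintype.card α + 1 := by
  have hle := card_le_univ σ.support
  simp only [ncycles, h.cycleType, Multiset.sum_singleton, Multiset.card_singleton]
  omega

lemma support_swap_apply_mul_subset (σ : Perm α) (k : α) :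
    (swap k (σ k) * σ).support ⊆ σ.support := by
  intro j hj
  contrapose! hj
  rw [notMem_support] at hj ⊢
  by_cases hjk : j = k
  · simp [← hjk, hj]
  · have hne : j ≠ σ k := fun h => hjk (σ.injective (hj.trans h))
    simp [hj, swap_apply_of_ne_of_ne hjk hne]

lemma ncycles_swap_apply_mul_of_isCycle (h : σ.IsCycle) (hk : σ k ≠ k) :
    ncycles (swap k (σ k) * σ) = ncycles σ + 1 := by
  have hσ := ncycles_add_card_support h
  by_cases hkk : σ (σ k) = k
  · have hswap : σ = swap k (σ k) := h.eq_swap_of_apply_apply_eq_self hk hkk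
    have hone : swap k (σ k) * σ = 1 := by
      nth_rw 2 [hswap]
      exact swap_mul_self _ _
    have htwo : #σ.support = 2 := by
      rw [hswap]
      exact card_support_swap hk.symm
    rw [hone, ncycles_one]
    omega
  · have hcard : #(swap k (σ k) * σ).support + 1 = #σ.support := by
      rw [support_swap_mul_eq _ _ hkk, sdiff_singleton_eq_erase,
        card_erase_add_one (mem_support.2 hk)]
    have hσ' := ncycles_add_card_support (h.swap_mul hk hkk)
    omega

lemma ncycles_swap_apply_mul (hk : σ k ≠ k) :
    ncycles (swap k (σ k) * σ) = ncycles σ + 1 := by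
  have hmem : σ.cycleOf k ∈ σ.cycleFactorsFinset :=
    cycleOf_mem_cycleFactorsFinset_iff.2 (mem_support.2 hk)
  have hcycle : (σ.cycleOf k).IsCycle := (mem_cycleFactorsFinset_iff.1 hmem).1
  have happly : σ.cycleOf k k = σ k := cycleOf_apply_self σ k
  have hdisj : Perm.Disjoint (σ.cycleOf k) (σ * (σ.cycleOf k)⁻¹) :=
    (disjoint_mul_inv_of_mem_cycleFactorsFinset hmem).symm
  have hfactor : σ.cycleOf k * (σ * (σ.cycleOf k)⁻¹) = σ := by
    rw [hdisj.commute.eq, inv_mul_cancel_right]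
  have hdisj' : Perm.Disjoint (swap k (σ k) * σ.cycleOf k) (σ * (σ.cycleOf k)⁻¹) :=
    hdisj.mono (happly ▸ support_swap_apply_mul_subset (σ.cycleOf k) k) subset_rfl
  have hσ := ncycles_mul_add_card hdisj
  have hσ' := ncycles_mul_add_card hdisj'
  have hc := ncycles_swap_apply_mul_of_isCycle hcycle (happly.trans_ne hk)
  rw [happly] at hc
  rw [hfactor] at hσ
  rw [mul_assoc, hfactor] at hσ'
  omega

lemma ncycles_swap_mul_add_one (hk : σ k = k) (hik : i ≠ k) :
    ncycles (swap i k * σ) + 1 = ncycles σ := by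
  have happly : (swap i k * σ) k = i := by simp [hk]
  have h := ncycles_swap_apply_mul (happly.trans_ne hik)
  rwa [happly, swap_comm k i, swap_mul_self_mul, eq_comm] at h

lemma card_compl_le_ncycles {U : Finset α} (h : σ.support ⊆ U) : #Uᶜ ≤ ncycles σ := by
  have hle := card_le_card h
  rw [card_compl, ncycles, sum_cycleType]
  omega

lemma ncycles_eq_card_parts_partition (σ : Perm α) : ncycles σ = σ.partition.parts.card := by
  rw [ncycles, parts_partition, Multiset.card_add, Multiset.card_replicate, sum_cycleType, add_comm]

lemma parts_partition_of_ncycles_eq_one (h : ncycles σ = 1) :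
    σ.partition.parts = {Fintype.card α} := by
  obtain ⟨m, hm⟩ := Multiset.card_eq_one.1 ((ncycles_eq_card_parts_partition σ).symm.trans h)
  have hsum := σ.partition.parts_sum
  rw [hm, Multiset.sum_singleton] at hsum
  rw [hm, hsum]

lemma isConj_of_ncycles_eq_one (hσ : ncycles σ = 1) (hτ : ncycles τ = 1) : IsConj σ τ := by
  rw [partition_eq_of_isConj, Nat.Partition.ext_iff, parts_partition_of_ncycles_eq_one hσ,
    parts_partition_of_ncycles_eq_one hτ]

lemma ncycles_finRotate (m : ℕ) : ncycles (finRotate (m + 1)) = 1 := by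
  cases m with
  | zero => simp [ncycles, Subsingleton.elim (finRotate 1) 1]
  | succ m => simp [ncycles, cycleType_finRotate]

end CycleCount

section PermsOfFinset

variable {α : Type*} [DecidableEq α] {A B : Finset α} {σ τ : Perm α} {i j k : α}

lemma apply_eq_of_mem_permsOfFinset (hσ : σ ∈ permsOfFinset A) (hi : i ∉ A) : σ i = i :=
  not_not.1 fun h => hi (mem_perms_of_finset_iff.1 hσ h)

lemma apply_mem_iff_of_mem_permsOfFinset (hσ : σ ∈ permsOfFinset A) : σ i ∈ A ↔ i ∈ A := by
  by_cases h : σ i = i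
  · rw [h]
  · exact iff_of_true (mem_perms_of_finset_iff.1 hσ fun h' => h (σ.injective h'))
      (mem_perms_of_finset_iff.1 hσ h)

lemma permsOfFinset_mono (h : A ⊆ B) : permsOfFinset A ⊆ permsOfFinset B := fun _ hσ =>
  mem_perms_of_finset_iff.2 fun hx => h (mem_perms_of_finset_iff.1 hσ hx)

lemma one_mem_permsOfFinset : 1 ∈ permsOfFinset A :=
  mem_perms_of_finset_iff.2 fun h => absurd rfl h

lemma swap_mem_permsOfFinset (hi : i ∈ A) (hj : j ∈ A) : swap i j ∈ permsOfFinset A :=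
  mem_perms_of_finset_iff.2 fun hx => by
    rcases (swap_apply_ne_self_iff.1 hx).2 with rfl | rfl <;> assumption

lemma mul_mem_permsOfFinset (hσ : σ ∈ permsOfFinset A) (hτ : τ ∈ permsOfFinset A) :
    σ * τ ∈ permsOfFinset A :=
  mem_perms_of_finset_iff.2 fun {x} hx => by
    by_contra hxA
    apply hx
    rw [mul_apply, apply_eq_of_mem_permsOfFinset hτ hxA, apply_eq_of_mem_permsOfFinset hσ hxA]

lemma inv_mem_permsOfFinset (hσ : σ ∈ permsOfFinset A) : σ⁻¹ ∈ permsOfFinset A :=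
  mem_perms_of_finset_iff.2 fun hx => mem_perms_of_finset_iff.1 hσ fun h =>
    hx (inv_eq_iff_eq.2 h.symm)

lemma mul_mem_permsOfFinset_iff_left (hσ : σ ∈ permsOfFinset A) :
    σ * τ ∈ permsOfFinset A ↔ τ ∈ permsOfFinset A :=
  ⟨fun h => inv_mul_cancel_left σ τ ▸ mul_mem_permsOfFinset (inv_mem_permsOfFinset hσ) h,
    mul_mem_permsOfFinset hσ⟩

lemma mul_mem_permsOfFinset_iff_right (hσ : σ ∈ permsOfFinset A) :
    τ * σ ∈ permsOfFinset A ↔ τ ∈ permsOfFinset A :=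
  ⟨fun h => mul_inv_cancel_right τ σ ▸ mul_mem_permsOfFinset h (inv_mem_permsOfFinset hσ),
    fun h => mul_mem_permsOfFinset h hσ⟩

lemma eq_one_of_mem_permsOfFinset_of_inter_subset {x : α} (hAB : A ∩ B ⊆ {x})
    (hA : σ ∈ permsOfFinset A) (hB : σ ∈ permsOfFinset B) : σ = 1 := by
  have hfix : ∀ i, i ≠ x → σ i = i := fun i hi => by
    by_contra h
    exact hi (mem_singleton.1 (hAB (mem_inter.2
      ⟨mem_perms_of_finset_iff.1 hA h, mem_perms_of_finset_iff.1 hB h⟩)))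
  ext i
  by_cases hi : i = x
  · by_contra h
    exact h (σ.injective (hfix _ fun h' => h (h'.trans hi.symm)))
  · exact hfix i hi

lemma permsOfFinset_singleton (x : α) : permsOfFinset {x} = {1} := by
  refine eq_singleton_iff_unique_mem.2 ⟨one_mem_permsOfFinset, fun σ hσ => ?_⟩
  exact eq_one_of_mem_permsOfFinset_of_inter_subset inter_subset_left hσ hσ

lemma swap_apply_mul_mem_permsOfFinset (hσ : σ ∈ permsOfFinset (insert k A)) :
    swap (σ k) k * σ ∈ permsOfFinset A := by
  have hkA := mem_insert_self k A
  have hσk : σ k ∈ insert k A := (apply_mem_iff_of_mem_permsOfFinset hσ).2 hkA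
  have hmem := mul_mem_permsOfFinset (swap_mem_permsOfFinset hσk hkA) hσ
  refine mem_perms_of_finset_iff.2 fun {x} hx => ?_
  refine (mem_insert.1 (mem_perms_of_finset_iff.1 hmem hx)).resolve_left fun hxk => hx ?_
  simp [hxk]

lemma sum_permsOfFinset_insert {M : Type*} [AddCommMonoid M] (hk : k ∉ A) (g : Perm α → M) :
    ∑ σ ∈ permsOfFinset (insert k A), g σ =
      ∑ σ ∈ permsOfFinset A, ∑ i ∈ insert k A, g (swap i k * σ) := by
  have hkA := mem_insert_self k A
  rw [← sum_product']
  refine sum_nbij' (fun σ => (swap (σ k) k * σ, σ k)) (fun p => swap p.2 k * p.1)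
    (fun σ hσ => ?_) (fun p hp => ?_) (fun σ _ => swap_mul_self_mul ..) (fun p hp => ?_)
    (fun σ _ => by rw [swap_mul_self_mul])
  · exact mem_product.2 ⟨swap_apply_mul_mem_permsOfFinset hσ,
      (apply_mem_iff_of_mem_permsOfFinset hσ).2 hkA⟩
  · obtain ⟨hσ, hi⟩ := mem_product.1 hp
    exact mul_mem_permsOfFinset (swap_mem_permsOfFinset hi hkA)
      (permsOfFinset_mono (subset_insert k A) hσ)
  · have hfix : p.1 k = k := apply_eq_of_mem_permsOfFinset (mem_product.1 hp).1 hk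
    simp [hfix]

end PermsOfFinset

section GroupAlgebra

variable {R α : Type*} [CommRing R] [DecidableEq α] {A B : Finset α} {σ : Perm α} {x i k : α}

/-- The element `∑ w(σ) σ` of the group algebra, summed over the permutations `σ` supported
in `A`: the common form of symmetrizers, antisymmetrizers and `σ ↦ n ^ #σ`. -/
def permSum (w : Perm α → R) (A : Finset α) : R[Perm α] :=
  ∑ σ ∈ permsOfFinset A, single σ (w σ)

variable (R) in
/-- The Jucys–Murphy element `∑_{i ∈ A} (i k)`; no ordering of the points is chosen, `A` plays the
role of the points preceding `k`. -/
def jucysMurphy (A : Finset α) (k : α) : R[Perm α] :=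
  ∑ i ∈ A, single (swap i k) 1

lemma jucysMurphy_insert (hi : i ∉ A) (k : α) :
    jucysMurphy R (insert i A) k = single (swap i k) 1 + jucysMurphy R A k :=
  sum_insert hi

lemma jucysMurphy_union (h : Disjoint A B) (k : α) :
    jucysMurphy R (A ∪ B) k = jucysMurphy R A k + jucysMurphy R B k :=
  sum_union h

lemma permSum_singleton (w : Perm α → R) (x : α) : permSum w {x} = single 1 (w 1) := by
  rw [permSum, permsOfFinset_singleton, sum_singleton]

lemma permSum_insert {w w' : Perm α → R} {a b : R} (hk : k ∉ A)
    (hfix : ∀ σ ∈ permsOfFinset A, w' σ = a * w σ)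
    (hswap : ∀ σ ∈ permsOfFinset A, ∀ i ∈ A, w' (swap i k * σ) = b * w σ) :
    permSum w' (insert k A) = (a • 1 + b • jucysMurphy R A k) * permSum w A := by
  rw [permSum, permSum, sum_permsOfFinset_insert hk, mul_sum]
  refine sum_congr rfl fun σ hσ => ?_
  rw [sum_insert hk, swap_self, ← Perm.one_def, one_mul, hfix σ hσ, add_mul, jucysMurphy, smul_sum,
    sum_mul]
  congr 1
  · simp
  · exact sum_congr rfl fun i hi => by simp [hswap σ hσ i hi]

lemma commute_permSum {z : R[Perm α]} (w : Perm α → R)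
    (h : ∀ σ ∈ permsOfFinset A, Commute z (single σ 1)) : Commute z (permSum w A) := by
  refine Commute.sum_right _ _ _ fun σ hσ => ?_
  simpa using (h σ hσ).smul_right (w σ)

lemma commute_jucysMurphy_single (hk : k ∉ A) (hσ : σ ∈ permsOfFinset A) :
    Commute (jucysMurphy R A k) (single σ 1) := by
  rw [commute_iff_eq, jucysMurphy, sum_mul, mul_sum]
  refine (sum_equiv σ (fun i => (apply_mem_iff_of_mem_permsOfFinset hσ).symm) fun i _ => ?_).symm
  rw [single_mul_single, single_mul_single, mul_swap_eq_swap_mul,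
    apply_eq_of_mem_permsOfFinset hσ hk]

lemma commute_permSum_single {w : Perm α → R} (hw : ∀ σ τ, w (σ * τ) = w (τ * σ))
    (hσ : σ ∈ permsOfFinset A) : Commute (permSum w A) (single σ 1) := by
  rw [commute_iff_eq, permSum, sum_mul, mul_sum]
  refine sum_equiv (MulAut.conj σ⁻¹).toEquiv (fun τ => ?_) fun τ _ => ?_
  · simp [mul_assoc, mul_mem_permsOfFinset_iff_left (inv_mem_permsOfFinset hσ),
      mul_mem_permsOfFinset_iff_right hσ]
  · simp [mul_assoc, hw σ⁻¹]

variable (R) in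
/-- The row symmetrizer of a Young symmetrizer, without normalization. -/
def symmetrizer (B : Finset α) : R[Perm α] := permSum 1 B

lemma symmetrizer_insert (hk : k ∉ B) :
    symmetrizer R (insert k B) = symmetrizer R B * (1 + jucysMurphy R B k) := by
  have h := permSum_insert (w := 1) (w' := 1) (a := (1 : R)) (b := 1) hk (by simp) (by simp)
  rw [one_smul, one_smul] at h
  have hcomm : Commute (1 + jucysMurphy R B k) (permSum 1 B) :=
    commute_permSum _ fun σ hσ => (Commute.one_left _).add_left (commute_jucysMurphy_single hk hσ)
  exact h.trans hcomm.eq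

lemma single_mul_symmetrizer (hσ : σ ∈ permsOfFinset B) :
    single σ 1 * symmetrizer R B = symmetrizer R B := by
  rw [symmetrizer, permSum, mul_sum]
  exact sum_equiv (Equiv.mulLeft σ) (fun τ => (mul_mem_permsOfFinset_iff_left hσ).symm)
    fun τ _ => by simp

lemma jucysMurphy_mul_symmetrizer (hAB : A ⊆ B) (hk : k ∈ B) :
    jucysMurphy R A k * symmetrizer R B = (#A : R) • symmetrizer R B := by
  rw [jucysMurphy, sum_mul, sum_congr rfl fun i hi =>
    single_mul_symmetrizer (swap_mem_permsOfFinset (hAB hi) hk), sum_const, Nat.cast_smul_eq_nsmul]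

variable [Fintype α]

lemma coeff_permSum (w : Perm α → R) (A : Finset α) (σ : Perm α) :
    (permSum w A).coeff σ = if σ ∈ permsOfFinset A then w σ else 0 := by
  simp [permSum, coeff_sum, coeff_single, Finsupp.single_apply]

variable (R) in
/-- The column antisymmetrizer of a Young symmetrizer, without normalization. -/
def antisymmetrizer (A : Finset α) : R[Perm α] := permSum (fun σ => ((sign σ : ℤ) : R)) A

lemma antisymmetrizer_insert (hk : k ∉ A) :
    antisymmetrizer R (insert k A) = (1 - jucysMurphy R A k) * antisymmetrizer R A := by
  have h := permSum_insert (w := fun σ => ((sign σ : ℤ) : R)) (w' := fun σ => ((sign σ : ℤ) : R))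
    (a := 1) (b := -1) hk (by simp)
    (fun σ _ i hi => by simp [sign_swap (ne_of_mem_of_not_mem hi hk)])
  rwa [one_smul, neg_one_smul, ← sub_eq_add_neg] at h

lemma antisymmetrizer_mul_single (hσ : σ ∈ permsOfFinset A) :
    antisymmetrizer R A * single σ 1 = (sign σ : ℤ) • antisymmetrizer R A := by
  have hsq : ((sign σ : ℤ) : R) * (sign σ : ℤ) = 1 := by
    rw [← Int.cast_mul, ← Units.val_mul, Int.units_mul_self, Units.val_one, Int.cast_one]
  rw [antisymmetrizer, permSum, sum_mul, smul_sum]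
  refine sum_equiv (Equiv.mulRight σ) (fun τ => (mul_mem_permsOfFinset_iff_right hσ).symm)
    fun τ _ => ?_
  simp [mul_left_comm _ ((sign τ : ℤ) : R), hsq]

lemma antisymmetrizer_mul_jucysMurphy {A' : Finset α} (hA : A' ⊆ A) (hk : k ∈ A) (hkA' : k ∉ A') :
    antisymmetrizer R A * jucysMurphy R A' k = -(#A' : R) • antisymmetrizer R A := by
  have hswap : ∀ i ∈ A', antisymmetrizer R A * single (swap i k) 1 = -antisymmetrizer R A :=
    fun i hi => by
      simp [antisymmetrizer_mul_single (swap_mem_permsOfFinset (hA hi) hk),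
        sign_swap (ne_of_mem_of_not_mem hi hkA')]
  rw [jucysMurphy, mul_sum, sum_congr rfl hswap, sum_const, smul_neg, neg_smul,
    Nat.cast_smul_eq_nsmul]

lemma coeff_one_antisymmetrizer_mul_symmetrizer (hAB : A ∩ B ⊆ {x}) :
    (antisymmetrizer R A * symmetrizer R B).coeff 1 = 1 := by
  have hcoeff : ∀ σ : Perm α, (symmetrizer R B).coeff σ = if σ ∈ permsOfFinset B then 1 else 0 :=
    coeff_permSum (1 : Perm α → R) B
  rw [antisymmetrizer, permSum, sum_mul, coeff_sum, Finsupp.finsetSum_apply,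
    sum_eq_single_of_mem 1 one_mem_permsOfFinset]
  · simp [hcoeff, one_mem_permsOfFinset]
  · intro σ hσ hne
    have hσB : σ⁻¹ ∉ permsOfFinset B := fun h => hne <|
      eq_one_of_mem_permsOfFinset_of_inter_subset hAB hσ (inv_inv σ ▸ inv_mem_permsOfFinset h)
    simp [hcoeff, hσB]

-- The transposition `(x j)` is absorbed by `symmetrizer B`, and `(i j)(x j) = (x i)(i j)` turns it
-- into `(x i)`, which `antisymmetrizer A` absorbs with a sign.
lemma antisymmetrizer_mul_swap_mul_symmetrizer [IsAddTorsionFree R] {j : α} (hxA : x ∈ A)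
    (hxB : x ∈ B) (hi : i ∈ A) (hj : j ∈ B) (hix : i ≠ x) (hjx : j ≠ x) :
    antisymmetrizer R A * single (swap i j) 1 * symmetrizer R B = 0 := by
  have hswap : swap i j * swap x j = swap x i * swap i j := by
    rw [mul_swap_eq_swap_mul, swap_apply_right, swap_apply_of_ne_of_ne hix.symm hjx.symm]
  have hneg : antisymmetrizer R A * single (swap i j) 1 * symmetrizer R B =
      -(antisymmetrizer R A * single (swap i j) 1 * symmetrizer R B) :=
    calc antisymmetrizer R A * single (swap i j) 1 * symmetrizer R B
        = antisymmetrizer R A * (single (swap i j) 1 * single (swap x j) 1) * symmetrizer R B := by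
          rw [mul_assoc, mul_assoc, mul_assoc,
            single_mul_symmetrizer (swap_mem_permsOfFinset hxB hj)]
      _ = antisymmetrizer R A * single (swap x i) 1 * single (swap i j) 1 * symmetrizer R B := by
          rw [single_mul_single, hswap, mul_assoc _ (single (swap x i) 1), single_mul_single]
      _ = -(antisymmetrizer R A * single (swap i j) 1 * symmetrizer R B) := by
          rw [antisymmetrizer_mul_single (swap_mem_permsOfFinset hxA hi), sign_swap hix.symm]
          simp
  ext σ
  have hcoeff := congrArg (fun z => z.coeff σ) hneg
  exact self_eq_neg.1 (by simpa only [coeff_neg, Finsupp.neg_apply] using hcoeff)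

end GroupAlgebra

section HookElement

variable {R α : Type*} [CommRing R] [Fintype α] [DecidableEq α] {A P Q U : Finset α} {σ : Perm α}
  {n : R} {x k : α}

/-- The element `∑ n ^ #σ σ` of the group algebra of the permutations of `U`, whose inverse is the
Weingarten function. The exponent counts the cycles on `U`, all points outside `U` being fixed; in
particular the truncated subtraction never truncates. -/
def cycleElement (n : R) (U : Finset α) : R[Perm α] :=
  permSum (fun σ => n ^ (ncycles σ - #Uᶜ)) U

lemma cycleElement_singleton (n : R) (x : α) : cycleElement n {x} = n • 1 := by
  have hcard : Fintype.card α - #({x} : Finset α)ᶜ = 1 := by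
    rw [← card_add_card_compl {x}, card_singleton, Nat.add_sub_cancel]
  rw [cycleElement, permSum_singleton, ncycles_one, hcard, pow_one, MonoidAlgebra.one_def,
    MonoidAlgebra.smul_single, smul_eq_mul, mul_one]

lemma cycleElement_insert (n : R) (hk : k ∉ U) :
    cycleElement n (insert k U) = (n • 1 + jucysMurphy R U k) * cycleElement n U := by
  have hcompl : #(insert k U)ᶜ + 1 = #Uᶜ := by
    rw [compl_insert, card_erase_add_one (mem_compl.2 hk)]
  have hle : ∀ σ ∈ permsOfFinset U, #Uᶜ ≤ ncycles σ := fun σ hσ =>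
    card_compl_le_ncycles fun _ hi => mem_perms_of_finset_iff.1 hσ (mem_support.1 hi)
  rw [← one_smul R (jucysMurphy R U k)]
  refine permSum_insert hk (fun σ hσ => ?_) fun σ hσ i hi => ?_
  · rw [← pow_succ', ← hcompl, Nat.sub_add_eq,
      Nat.sub_add_cancel (Nat.le_sub_of_add_le' (hcompl.trans_le (hle σ hσ)))]
  · rw [one_mul, ← ncycles_swap_mul_add_one (apply_eq_of_mem_permsOfFinset hσ hk)
      (ne_of_mem_of_not_mem hi hk), ← hcompl, Nat.add_sub_add_right]

lemma commute_cycleElement_single (n : R) (hσ : σ ∈ permsOfFinset U) :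
    Commute (cycleElement n U) (single σ 1) :=
  commute_permSum_single (fun σ τ => by rw [ncycles_mul_comm]) hσ

lemma commute_cycleElement_permSum (n : R) (hA : A ⊆ U) (w : Perm α → R) :
    Commute (cycleElement n U) (permSum w A) :=
  commute_permSum w fun _ hσ => commute_cycleElement_single n (permsOfFinset_mono hA hσ)

lemma commute_jucysMurphy_cycleElement (n : R) (hk : k ∉ U) :
    Commute (jucysMurphy R U k) (cycleElement n U) :=
  commute_permSum _ fun _ hσ => commute_jucysMurphy_single hk hσ

variable (R) in
/-- The Young symmetrizer of the hook with corner `x`, leg `P` and arm `Q`. -/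
def hookElement (x : α) (P Q : Finset α) : R[Perm α] :=
  antisymmetrizer R (insert x P) * symmetrizer R (insert x Q)

lemma hookElement_insert_leg (hk : k ∉ insert x P) (Q : Finset α) :
    hookElement R x (insert k P) Q =
      (1 - jucysMurphy R (insert x P) k) * hookElement R x P Q := by
  rw [hookElement, insert_comm, antisymmetrizer_insert hk, mul_assoc, hookElement]

lemma hookElement_insert_arm (P : Finset α) (hk : k ∉ insert x Q) :
    hookElement R x P (insert k Q) =
      hookElement R x P Q * (1 + jucysMurphy R (insert x Q) k) := by
  rw [hookElement, insert_comm, symmetrizer_insert hk, ← mul_assoc, hookElement]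

lemma commute_cycleElement_hookElement (n : R) (hP : insert x P ⊆ U) (hQ : insert x Q ⊆ U) :
    Commute (cycleElement n U) (hookElement R x P Q) :=
  (commute_cycleElement_permSum n hP _).mul_right (commute_cycleElement_permSum n hQ _)

lemma hookElement_empty (x : α) : hookElement R x ∅ ∅ = 1 := by
  simp [hookElement, antisymmetrizer, symmetrizer, permSum_singleton, MonoidAlgebra.one_def]

variable [IsAddTorsionFree R]

lemma antisymmetrizer_mul_jucysMurphy_mul_symmetrizer_of_leg (hPQ : Disjoint P Q)
    (hxP : x ∉ P) (hxQ : x ∉ Q) (hk : k ∉ insert x (P ∪ Q)) :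
    antisymmetrizer R (insert x (insert k P)) * jucysMurphy R (insert x (P ∪ Q)) k *
      symmetrizer R (insert x Q) = -(#P + 1 : R) • hookElement R x (insert k P) Q := by
  have hkx : k ≠ x := fun h => hk (h ▸ mem_insert_self _ _)
  have hkP : k ∉ insert x P := fun h => hk (insert_subset_insert x subset_union_left h)
  have hvanish : antisymmetrizer R (insert x (insert k P)) * jucysMurphy R Q k *
      symmetrizer R (insert x Q) = 0 := by
    rw [jucysMurphy, mul_sum, sum_mul]
    refine sum_eq_zero fun i hi => ?_
    rw [Equiv.swap_comm]
    exact antisymmetrizer_mul_swap_mul_symmetrizer (mem_insert_self x _) (mem_insert_self x Q)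
      (by simp) (mem_insert_of_mem hi) hkx (ne_of_mem_of_not_mem hi hxQ)
  rw [← insert_union, jucysMurphy_union (disjoint_insert_left.2 ⟨hxQ, hPQ⟩), mul_add, add_mul,
    hvanish, add_zero, antisymmetrizer_mul_jucysMurphy (insert_subset_insert x (subset_insert k P))
    (by simp) hkP, smul_mul_assoc, card_insert_of_notMem hxP, Nat.cast_succ, hookElement]

lemma antisymmetrizer_mul_jucysMurphy_mul_symmetrizer_of_arm (hPQ : Disjoint P Q)
    (hxP : x ∉ P) (hxQ : x ∉ Q) (hk : k ∉ insert x (P ∪ Q)) :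
    antisymmetrizer R (insert x P) * jucysMurphy R (insert x (P ∪ Q)) k *
      symmetrizer R (insert x (insert k Q)) = (#Q + 1 : R) • hookElement R x P (insert k Q) := by
  have hkx : k ≠ x := fun h => hk (h ▸ mem_insert_self _ _)
  have hvanish : antisymmetrizer R (insert x P) * jucysMurphy R P k *
      symmetrizer R (insert x (insert k Q)) = 0 := by
    rw [jucysMurphy, mul_sum, sum_mul]
    exact sum_eq_zero fun i hi => antisymmetrizer_mul_swap_mul_symmetrizer (mem_insert_self x P)
      (mem_insert_self x _) (mem_insert_of_mem hi) (by simp) (ne_of_mem_of_not_mem hi hxP) hkx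
  rw [← union_insert, jucysMurphy_union (disjoint_insert_right.2 ⟨hxP, hPQ⟩), mul_add, add_mul,
    hvanish, zero_add, mul_assoc, jucysMurphy_mul_symmetrizer
    (insert_subset_insert x (subset_insert k Q)) (by simp), mul_smul_comm,
    card_insert_of_notMem hxQ, Nat.cast_succ, hookElement]

lemma cycleElement_mul_hookElement_insert_leg (n : R) (hPQ : Disjoint P Q) (hxP : x ∉ P)
    (hxQ : x ∉ Q) (hk : k ∉ insert x (P ∪ Q)) :
    cycleElement n (insert k (insert x (P ∪ Q))) * hookElement R x (insert k P) Q =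
      (n - (#P + 1)) • ((1 - jucysMurphy R (insert x P) k) *
        (cycleElement n (insert x (P ∪ Q)) * hookElement R x P Q)) := by
  set U := insert x (P ∪ Q)
  have hPU : insert x P ⊆ U := insert_subset_insert x subset_union_left
  have hQU : insert x Q ⊆ U := insert_subset_insert x subset_union_right
  have hN : Commute (cycleElement n (insert k U)) (antisymmetrizer R (insert x (insert k P))) :=
    commute_cycleElement_permSum n (insert_comm x k P ▸ insert_subset_insert k hPU) _
  have hS : Commute (cycleElement n U) (symmetrizer R (insert x Q)) :=
    commute_cycleElement_permSum n hQU _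
  calc cycleElement n (insert k U) * hookElement R x (insert k P) Q
      = antisymmetrizer R (insert x (insert k P)) * (n • 1 + jucysMurphy R U k) *
          symmetrizer R (insert x Q) * cycleElement n U := by
        rw [hookElement, ← mul_assoc, hN.eq, cycleElement_insert n hk]
        simp only [mul_assoc, hS.eq]
    _ = (n - (#P + 1)) • (hookElement R x (insert k P) Q * cycleElement n U) := by
        rw [mul_add, add_mul,
          antisymmetrizer_mul_jucysMurphy_mul_symmetrizer_of_leg hPQ hxP hxQ hk, mul_smul_comm,
          mul_one, smul_mul_assoc, ← hookElement, ← add_smul, ← sub_eq_add_neg, smul_mul_assoc]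
    _ = _ := by
        rw [hookElement_insert_leg (fun h => hk (hPU h)), mul_assoc,
          (commute_cycleElement_hookElement n hPU hQU).eq]

lemma cycleElement_mul_hookElement_insert_arm (n : R) (hPQ : Disjoint P Q) (hxP : x ∉ P)
    (hxQ : x ∉ Q) (hk : k ∉ insert x (P ∪ Q)) :
    cycleElement n (insert k (insert x (P ∪ Q))) * hookElement R x P (insert k Q) =
      (n + (#Q + 1)) • (cycleElement n (insert x (P ∪ Q)) * hookElement R x P Q *
        (1 + jucysMurphy R (insert x Q) k)) := by
  set U := insert x (P ∪ Q)
  have hPU : insert x P ⊆ U := insert_subset_insert x subset_union_left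
  have hQU : insert x Q ⊆ U := insert_subset_insert x subset_union_right
  have hN : Commute (antisymmetrizer R (insert x P)) (cycleElement n (insert k U)) :=
    (commute_cycleElement_permSum n (hPU.trans (subset_insert k U)) _).symm
  have hN' : Commute (antisymmetrizer R (insert x P)) (cycleElement n U) :=
    (commute_cycleElement_permSum n hPU _).symm
  have hJ : Commute (n • 1 + jucysMurphy R U k) (cycleElement n U) :=
    ((Commute.one_left _).smul_left n).add_left (commute_jucysMurphy_cycleElement n hk)
  calc cycleElement n (insert k U) * hookElement R x P (insert k Q)
      = cycleElement n U * (antisymmetrizer R (insert x P) * (n • 1 + jucysMurphy R U k) *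
          symmetrizer R (insert x (insert k Q))) := by
        rw [hookElement, ← mul_assoc, ← hN.eq, cycleElement_insert n hk, hJ.eq, ← mul_assoc, hN'.eq]
        simp only [mul_assoc]
    _ = (n + (#Q + 1)) • (cycleElement n U * hookElement R x P (insert k Q)) := by
        rw [mul_add, add_mul,
          antisymmetrizer_mul_jucysMurphy_mul_symmetrizer_of_arm hPQ hxP hxQ hk, mul_smul_comm,
          mul_one, smul_mul_assoc, ← hookElement, ← add_smul, mul_smul_comm]
    _ = _ := by rw [hookElement_insert_arm P (fun h => hk (hQU h)), mul_assoc]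

lemma cycleElement_mul_hookElement_of_empty_leg (n : R) (hxQ : x ∉ Q) :
    cycleElement n (insert x Q) * hookElement R x ∅ Q =
      (descPochhammer R (#Q + 1)).eval (n + #Q) • hookElement R x ∅ Q := by
  induction Q using Finset.induction_on with
  | empty => simp [hookElement_empty, cycleElement_singleton]
  | insert k Q hkQ ih =>
    obtain ⟨hxk, hxQ⟩ := not_or.1 (mt mem_insert.2 hxQ)
    have hk : k ∉ insert x Q := mt mem_insert.1 (not_or.2 ⟨Ne.symm hxk, hkQ⟩)
    have hstep := cycleElement_mul_hookElement_insert_arm n (disjoint_empty_left Q)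
      (notMem_empty x) hxQ (by rwa [empty_union])
    rw [empty_union, ih hxQ, smul_mul_assoc, ← hookElement_insert_arm ∅ hk, smul_smul] at hstep
    rw [insert_comm, hstep, card_insert_of_notMem hkQ, descPochhammer_succ_left R (#Q + 1)]
    simp [← add_assoc]

lemma cycleElement_mul_hookElement (n : R) (hPQ : Disjoint P Q) (hxP : x ∉ P)
    (hxQ : x ∉ Q) :
    cycleElement n (insert x (P ∪ Q)) * hookElement R x P Q =
      (descPochhammer R (#P + #Q + 1)).eval (n + #Q) • hookElement R x P Q := by
  induction P using Finset.induction_on with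
  | empty => simpa using cycleElement_mul_hookElement_of_empty_leg n hxQ
  | insert k P hkP ih =>
    obtain ⟨hxk, hxP⟩ := not_or.1 (mt mem_insert.2 hxP)
    obtain ⟨hkQ, hPQ⟩ := disjoint_insert_left.1 hPQ
    have hk : k ∉ insert x (P ∪ Q) := by simp [Ne.symm hxk, hkP, hkQ]
    have hkP' : k ∉ insert x P := fun h => hk (insert_subset_insert x subset_union_left h)
    rw [insert_union, insert_comm, cycleElement_mul_hookElement_insert_leg n hPQ hxP hxQ hk,
      ih hPQ hxP, mul_smul_comm, ← hookElement_insert_leg hkP', smul_smul,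
      card_insert_of_notMem hkP, add_right_comm (#P) 1, descPochhammer_succ_eval (#P + #Q + 1)]
    congr 1
    push_cast
    ring

end HookElement

section HookSum

variable {R α : Type*} [CommRing R] [DecidableEq α] {f : R[Perm α] →ₗ[R] R} {V : Finset α}
  {x k : α}

/-- `f` is a trace with respect to the permutations supported in `A`. -/
def IsTraceOn (f : R[Perm α] →ₗ[R] R) (A : Finset α) : Prop :=
  ∀ σ ∈ permsOfFinset A, ∀ z, f (single σ 1 * z) = f (z * single σ 1)

lemma IsTraceOn.map_mul_jucysMurphy {A : Finset α} (hf : IsTraceOn f (insert k A))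
    (z : R[Perm α]) : f (z * jucysMurphy R A k) = f (jucysMurphy R A k * z) := by
  simp only [jucysMurphy, mul_sum, sum_mul, map_sum]
  exact sum_congr rfl fun i hi => (hf _ (swap_mem_permsOfFinset (mem_insert_of_mem hi)
    (mem_insert_self k A)) z).symm

/-- The functional `z ↦ f (J z + z (x k))` with `J` the Jucys–Murphy element of `k` over
`insert x V`: traces take the same value on `hookSum x (insert k V)` as this functional takes on
`hookSum x V`. -/
def dropPoint (f : R[Perm α] →ₗ[R] R) (x k : α) (V : Finset α) : R[Perm α] →ₗ[R] R :=
  f ∘ₗ (LinearMap.mulLeft R (jucysMurphy R (insert x V) k) +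
    LinearMap.mulRight R (single (swap x k) 1))

lemma dropPoint_apply (f : R[Perm α] →ₗ[R] R) (x k : α) (V : Finset α) (z : R[Perm α]) :
    dropPoint f x k V z =
      f (jucysMurphy R (insert x V) k * z) + f (z * single (swap x k) 1) :=
  map_add f _ _

lemma isTraceOn_dropPoint (hf : IsTraceOn f (insert k V)) (hxV : x ∉ V) (hk : k ∉ insert x V) :
    IsTraceOn (dropPoint f x k V) V := by
  intro σ hσ z
  have hJ : Commute (jucysMurphy R (insert x V) k) (single σ 1) :=
    commute_jucysMurphy_single hk (permsOfFinset_mono (subset_insert x V) hσ)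
  have hswap : σ * swap x k = swap x k * σ := by
    rw [mul_swap_eq_swap_mul, apply_eq_of_mem_permsOfFinset hσ hxV,
      apply_eq_of_mem_permsOfFinset hσ fun h => hk (mem_insert_of_mem h)]
  have hf' := hf σ (permsOfFinset_mono (subset_insert k V) hσ)
  rw [dropPoint_apply, dropPoint_apply, ← mul_assoc, hJ.eq, mul_assoc, hf', mul_assoc, mul_assoc,
    hf', mul_assoc, mul_assoc, single_mul_single, single_mul_single, hswap]

variable [Fintype α]

lemma dropPoint_single {σ : Perm α} {v : R} (hxV : x ∉ V) (hk : k ∉ insert x V)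
    (hv : ∀ τ ∈ permsOfFinset (insert x (insert k V)),
      ncycles τ + #(insert k V) = Fintype.card α → f (single τ 1) = v)
    (hσ : σ ∈ permsOfFinset (insert x V)) (hcard : ncycles σ + #V = Fintype.card α) :
    dropPoint f x k V (single σ 1) = (#V + 2) * v := by
  have hσk : σ k = k := apply_eq_of_mem_permsOfFinset hσ hk
  have hσ' : σ ∈ permsOfFinset (insert x (insert k V)) :=
    permsOfFinset_mono (insert_subset_insert x (subset_insert k V)) hσ
  have hkV : #(insert k V) = #V + 1 :=
    card_insert_of_notMem fun h => hk (mem_insert_of_mem h)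
  have hswap : ∀ i ∈ insert x V, swap i k ∈ permsOfFinset (insert x (insert k V)) := fun i hi =>
    swap_mem_permsOfFinset (insert_subset_insert x (subset_insert k V) hi) (by simp)
  have hncycles : ∀ i ∈ insert x V,
      ncycles (swap i k * σ) + #(insert k V) = Fintype.card α := fun i hi => by
    rw [hkV, ← hcard, ← ncycles_swap_mul_add_one hσk (ne_of_mem_of_not_mem hi hk)]
    ring
  have hleft : ∀ i ∈ insert x V, f (single (swap i k) 1 * single σ 1) = v := fun i hi => by
    rw [single_mul_single, one_mul]
    exact hv _ (mul_mem_permsOfFinset (hswap i hi) hσ') (hncycles i hi)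
  have hright : f (single σ 1 * single (swap x k) 1) = v := by
    rw [single_mul_single, one_mul]
    exact hv _ (mul_mem_permsOfFinset hσ' (hswap x (mem_insert_self x V)))
      (ncycles_mul_comm σ _ ▸ hncycles x (mem_insert_self x V))
  rw [dropPoint_apply, hright, jucysMurphy, sum_mul, map_sum, sum_congr rfl hleft, sum_const,
    card_insert_of_notMem hxV, nsmul_eq_mul]
  push_cast
  ring

variable (R) in
/-- The alternating sum of the hook Young symmetrizers with corner `x` and remaining points `V`;
class functions see it as a multiple of a full cycle on `insert x V`. -/
def hookSum (x : α) (V : Finset α) : R[Perm α] :=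
  ∑ P ∈ V.powerset, (-1 : R) ^ #P • hookElement R x P (V \ P)

lemma hookSum_insert (hxV : x ∉ V) (hk : k ∉ insert x V) :
    hookSum R x (insert k V) = ∑ P ∈ V.powerset, (-1 : R) ^ #P •
      (jucysMurphy R (insert x P) k * hookElement R x P (V \ P) +
        hookElement R x P (V \ P) *
          (single (swap x k) 1 + jucysMurphy R (V \ P) k)) := by
  have hkV : k ∉ V := fun h => hk (mem_insert_of_mem h)
  rw [hookSum, sum_powerset_insert hkV, ← sum_add_distrib]
  refine sum_congr rfl fun P hP => ?_
  have hPV := mem_powerset.1 hP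
  have hkP : k ∉ insert x P := fun h => hk (insert_subset_insert x hPV h)
  have hkQ : k ∉ insert x (V \ P) := fun h => hk (insert_subset_insert x sdiff_subset h)
  have hxQ : x ∉ V \ P := fun h => hxV (mem_sdiff.1 h).1
  rw [insert_sdiff_insert, sdiff_insert_of_notMem hkV,
    insert_sdiff_of_notMem V (fun h => hkV (hPV h)), hookElement_insert_arm P hkQ,
    hookElement_insert_leg hkP, card_insert_of_notMem (fun h => hkV (hPV h)),
    jucysMurphy_insert hxQ]
  rw [pow_succ, mul_neg_one, neg_smul, ← sub_eq_add_neg, ← smul_sub]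
  congr 1
  noncomm_ring

lemma IsTraceOn.map_hookSum_insert (hf : IsTraceOn f (insert k V)) (hxV : x ∉ V)
    (hk : k ∉ insert x V) :
    f (hookSum R x (insert k V)) = dropPoint f x k V (hookSum R x V) := by
  rw [hookSum_insert hxV hk, hookSum, map_sum, map_sum]
  refine sum_congr rfl fun P hP => ?_
  have hsplit : insert x V = insert x P ∪ V \ P := by
    rw [insert_union, union_sdiff_of_subset (mem_powerset.1 hP)]
  have hdisj : Disjoint (insert x P) (V \ P) :=
    disjoint_insert_left.2 ⟨fun h => hxV (mem_sdiff.1 h).1, disjoint_sdiff⟩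
  have hfQ : IsTraceOn f (insert k (V \ P)) := fun σ hσ =>
    hf σ (permsOfFinset_mono (insert_subset_insert k sdiff_subset) hσ)
  rw [map_smul, map_smul, dropPoint_apply, hsplit, jucysMurphy_union hdisj]
  simp only [mul_add, add_mul, map_add, hfQ.map_mul_jucysMurphy]
  ring

lemma IsTraceOn.map_hookSum {v : R} (hf : IsTraceOn f V) (hxV : x ∉ V)
    (hv : ∀ σ ∈ permsOfFinset (insert x V), ncycles σ + #V = Fintype.card α →
      f (single σ 1) = v) :
    f (hookSum R x V) = (#V + 1).factorial * v := by
  induction V using Finset.induction_on generalizing f v with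
  | empty =>
    have hone := hv 1 one_mem_permsOfFinset (by simp [ncycles_one])
    simpa [hookSum, hookElement_empty, MonoidAlgebra.one_def] using hone
  | insert k V hkV ih =>
    obtain ⟨hxk, hxV⟩ := not_or.1 (mt mem_insert.2 hxV)
    have hk : k ∉ insert x V := mt mem_insert.1 (not_or.2 ⟨Ne.symm hxk, hkV⟩)
    rw [hf.map_hookSum_insert hxV hk, ih (isTraceOn_dropPoint hf hxV hk) hxV
      fun σ hσ hcard => dropPoint_single hxV hk hv hσ hcard, card_insert_of_notMem hkV,
      Nat.factorial_succ (#V + 1)]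
    push_cast
    ring

end HookSum

section DescPochhammer

open Polynomial

variable {R : Type*} [CommRing R]

lemma descPochhammer_eval_add_index (a b : ℕ) (y : R) :
    (descPochhammer R (a + b)).eval y =
      (descPochhammer R a).eval y * (descPochhammer R b).eval (y - a) := by
  simp [← descPochhammer_mul]

lemma descPochhammer_eval_neg (s : ℕ) (y : R) :
    (descPochhammer R s).eval (s - 1 - y) = (-1) ^ s * (descPochhammer R s).eval y := by
  rw [← ascPochhammer_eval_neg_eq_descPochhammer, descPochhammer_eval_eq_ascPochhammer]
  congr 1
  ring

lemma descPochhammer_eval_add (k : ℕ) (y z : R) :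
    (descPochhammer R k).eval (y + z) = ∑ p ∈ antidiagonal k,
      (k.choose p.1 : R) * ((descPochhammer R p.1).eval y * (descPochhammer R p.2).eval z) := by
  have heval : ∀ (j : ℕ) (w : R), (descPochhammer R j).eval w = (descPochhammer ℤ j).smeval w :=
    fun j w => by
      rw [← descPochhammer_map (Int.castRingHom R), eval_map, ← algebraMap_int_eq, ← aeval_def,
        aeval_eq_smeval]
  simp only [heval, Ring.descPochhammer_smeval_add k (Commute.all y z)]

lemma descPochhammer_eval_two_mul (m : ℕ) :
    (descPochhammer R m).eval (2 * m : R) = (m + 1).factorial * catalan m := by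
  have hnat : (2 * m).descFactorial m = (m + 1).factorial * catalan m := by
    rw [Nat.descFactorial_eq_factorial_mul_choose, ← Nat.centralBinom_eq_two_mul_choose,
      ← succ_mul_catalan_eq_centralBinom, Nat.factorial_succ]
    ring
  have hdesc := descPochhammer_eval_eq_descFactorial R (2 * m) m
  rw [hnat] at hdesc
  exact_mod_cast hdesc

lemma prod_Icc_sub_eq_descPochhammer_eval (n : R) (m : ℕ) :
    ∏ j ∈ Icc (-m : ℤ) m, (n - j) = (descPochhammer R (2 * m + 1)).eval (n + m) := by
  rw [descPochhammer_eval_eq_prod_range]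
  refine prod_nbij' (fun j => (j + m).toNat) (fun i => (i : ℤ) - m) ?_ ?_ ?_ ?_ ?_
  all_goals intro j hj
  all_goals simp only [mem_Icc, mem_range] at hj ⊢
  any_goals omega
  have hcast : (((j + m).toNat : ℤ) : R) = j + m := by
    rw [Int.toNat_of_nonneg (by omega)]
    push_cast
    rfl
  rw [← Int.cast_natCast (j + m).toNat, hcast]
  ring

lemma descPochhammer_eval_two_mul_add_one (n : R) {r s m : ℕ} (h : r + s = m) :
    (descPochhammer R (2 * m + 1)).eval (n + m) =
      (descPochhammer R r).eval (n + m) * (descPochhammer R (m + 1)).eval (n + s) *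
        ((-1) ^ s * (descPochhammer R s).eval (m - n)) := by
  subst h
  have hindex : 2 * (r + s) + 1 = r + (r + s + 1) + s := by ring
  have hmiddle : n + (r + s : ℕ) - r = n + s := by push_cast; ring
  have hlast : n + (r + s : ℕ) - (r + (r + s + 1) : ℕ) = s - 1 - ((r + s : ℕ) - n) := by
    push_cast; ring
  rw [hindex, descPochhammer_eval_add_index, descPochhammer_eval_add_index, hmiddle, hlast,
    descPochhammer_eval_neg]

end DescPochhammer

section WeingartenFunctional

variable {R α : Type*} [CommRing R] [Fintype α] [DecidableEq α] {n : R} {Wg : Perm α → R}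
  {P Q : Finset α} {x : α}

/-- `Wg` is the Weingarten function with parameter `n`: a convolution inverse of `σ ↦ n ^ #σ`. -/
def IsWeingarten (n : R) (Wg : Perm α → R) : Prop :=
  ∀ σ : Perm α, ∑ τ : Perm α, Wg τ * n ^ ncycles (σ * τ⁻¹) = if σ = 1 then 1 else 0

lemma permsOfFinset_univ : permsOfFinset (univ : Finset α) = univ :=
  eq_univ_of_forall fun _ => mem_perms_of_finset_iff.2 fun _ => mem_univ _

lemma coeff_permSum_univ (w : Perm α → R) (σ : Perm α) : (permSum w univ).coeff σ = w σ := by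
  rw [coeff_permSum, permsOfFinset_univ, if_pos (mem_univ σ)]

lemma IsWeingarten.cycleElement_mul_permSum (h : IsWeingarten n Wg) :
    cycleElement n univ * permSum Wg univ = 1 := by
  have hcoeff : ∀ σ : Perm α, (cycleElement n univ).coeff σ = n ^ ncycles σ := fun σ => by
    rw [cycleElement, coeff_permSum_univ, compl_univ, card_empty, Nat.sub_zero]
  ext σ
  rw [permSum, permsOfFinset_univ, mul_sum, coeff_sum, Finsupp.finsetSum_apply,
    MonoidAlgebra.one_def, coeff_single, Finsupp.single_apply]
  simpa [hcoeff, mul_comm, eq_comm (a := (1 : Perm α))] using h σ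

lemma IsWeingarten.permSum_mul_cycleElement (h : IsWeingarten n Wg) :
    permSum Wg univ * cycleElement n univ = 1 :=
  (commute_cycleElement_permSum n subset_rfl Wg).symm.eq.trans h.cycleElement_mul_permSum

lemma IsWeingarten.commute_permSum_single (h : IsWeingarten n Wg) (σ : Perm α) :
    Commute (permSum Wg univ) (single σ 1) :=
  let u : R[Perm α]ˣ := ⟨_, _, h.cycleElement_mul_permSum, h.permSum_mul_cycleElement⟩
  Commute.units_inv_left (u := u) <|
    commute_cycleElement_single n ((permsOfFinset_univ (α := α)).symm ▸ mem_univ σ)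

lemma IsWeingarten.apply_mul_comm (h : IsWeingarten n Wg) (σ τ : Perm α) :
    Wg (σ * τ) = Wg (τ * σ) := by
  have hcoeff := congrArg (fun z => z.coeff (σ * τ * σ)) (h.commute_permSum_single σ).eq
  simpa [coeff_permSum_univ, mul_assoc] using hcoeff

lemma IsWeingarten.apply_eq_of_isConj (h : IsWeingarten n Wg) {σ τ : Perm α} (hστ : IsConj σ τ) :
    Wg σ = Wg τ := by
  obtain ⟨g, rfl⟩ := isConj_iff.1 hστ
  rw [h.apply_mul_comm, inv_mul_cancel_left]

/-- The linear functional `z ↦ [1] (W z)`, where `W = ∑ w(σ) σ` and `[1]` is the coefficient of the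
identity. -/
def permSumFunctional (w : Perm α → R) : R[Perm α] →ₗ[R] R :=
  Finsupp.lapply 1 ∘ₗ (coeffLinearEquiv R).toLinearMap ∘ₗ LinearMap.mulLeft R (permSum w univ)

lemma permSumFunctional_apply (w : Perm α → R) (z : R[Perm α]) :
    permSumFunctional w z = (permSum w univ * z).coeff 1 :=
  rfl

lemma permSumFunctional_single (w : Perm α → R) (σ : Perm α) :
    permSumFunctional w (single σ 1) = w σ⁻¹ := by
  simp [permSumFunctional_apply, coeff_permSum_univ]

lemma IsWeingarten.isTraceOn_permSumFunctional (h : IsWeingarten n Wg) (A : Finset α) :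
    IsTraceOn (permSumFunctional Wg) A := by
  intro σ _ z
  rw [permSumFunctional_apply, permSumFunctional_apply, ← mul_assoc,
    (h.commute_permSum_single σ).eq, mul_assoc, coeff_single_mul_apply, ← mul_assoc,
    coeff_mul_single_apply, mul_one, one_mul, mul_one, one_mul]

lemma IsWeingarten.descPochhammer_eval_mul_permSumFunctional_hookElement [IsAddTorsionFree R]
    (h : IsWeingarten n Wg) (hPQ : Disjoint P Q) (hxP : x ∉ P) (hxQ : x ∉ Q)
    (huniv : insert x (P ∪ Q) = univ) :
    (descPochhammer R (#P + #Q + 1)).eval (n + #Q) *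
      permSumFunctional Wg (hookElement R x P Q) = 1 := by
  have hinter : insert x P ∩ insert x Q ⊆ {x} := by
    rw [← insert_inter_distrib, disjoint_iff_inter_eq_empty.1 hPQ, insert_empty_eq]
  have hhook := cycleElement_mul_hookElement n hPQ hxP hxQ
  rw [huniv] at hhook
  rw [← smul_eq_mul, ← map_smul, ← hhook, permSumFunctional_apply, ← mul_assoc,
    h.permSum_mul_cycleElement, one_mul]
  exact coeff_one_antisymmetrizer_mul_symmetrizer hinter

lemma IsWeingarten.permSumFunctional_hookSum (h : IsWeingarten n Wg) {σ : Perm α}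
    (hσ : ncycles σ = 1) (x : α) :
    permSumFunctional Wg (hookSum R x (univ.erase x)) = (Fintype.card α).factorial * Wg σ := by
  have hcard : #(univ.erase x) + 1 = Fintype.card α := card_erase_add_one (mem_univ x)
  rw [← hcard]
  refine (h.isTraceOn_permSumFunctional _).map_hookSum (notMem_erase x univ) fun τ _ hτ => ?_
  rw [permSumFunctional_single]
  refine h.apply_eq_of_isConj (isConj_of_ncycles_eq_one ?_ hσ)
  rw [ncycles_inv]
  omega

lemma IsWeingarten.descPochhammer_eval_mul_permSumFunctional_smul_hookElement
    [IsAddTorsionFree R] (h : IsWeingarten n Wg) {m : ℕ} (hm : #(univ.erase x) = m)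
    (hP : P ⊆ univ.erase x) :
    (descPochhammer R (2 * m + 1)).eval (n + m) *
      permSumFunctional Wg ((-1 : R) ^ #P • hookElement R x P (univ.erase x \ P)) =
        (-1) ^ m * ((descPochhammer R #P).eval (n + m) *
          (descPochhammer R (m - #P)).eval (m - n)) := by
  set Q := univ.erase x \ P
  have hcard : #P + #Q = m := by rw [add_comm, card_sdiff_add_card_eq_card hP, hm]
  have hone := h.descPochhammer_eval_mul_permSumFunctional_hookElement
    (P := P) (Q := Q) (x := x) disjoint_sdiff (fun hx => notMem_erase x univ (hP hx))
    (fun hx => notMem_erase x univ (mem_sdiff.1 hx).1)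
    (by rw [union_sdiff_of_subset hP, insert_erase (mem_univ x)])
  rw [hcard] at hone
  rw [descPochhammer_eval_two_mul_add_one n hcard, map_smul, smul_eq_mul, ← hcard, pow_add,
    Nat.add_sub_cancel_left, hcard]
  linear_combination (-1) ^ #P * (descPochhammer R #P).eval (n + m) *
    ((-1) ^ #Q * (descPochhammer R #Q).eval (m - n)) * hone

lemma IsWeingarten.descPochhammer_eval_mul_permSumFunctional_hookSum [IsAddTorsionFree R]
    (h : IsWeingarten n Wg) {m : ℕ} (hm : #(univ.erase x) = m) :
    (descPochhammer R (2 * m + 1)).eval (n + m) *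
      permSumFunctional Wg (hookSum R x (univ.erase x)) =
        (-1) ^ m * ((m + 1).factorial * catalan m) := by
  have hargs : (2 * m : R) = (n + m) + (m - n) := by ring
  rw [hookSum, map_sum, mul_sum, sum_congr rfl fun P hP =>
    h.descPochhammer_eval_mul_permSumFunctional_smul_hookElement hm (mem_powerset.1 hP), ← mul_sum,
    sum_powerset_apply_card fun r => (descPochhammer R r).eval (n + m) *
      (descPochhammer R (m - r)).eval (m - n), hm, ← descPochhammer_eval_two_mul, hargs,
    descPochhammer_eval_add, Nat.sum_antidiagonal_eq_sum_range_succ_mk]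
  simp only [nsmul_eq_mul]

lemma IsWeingarten.prod_mul_apply {K : Type*} [Field K] [CharZero K] {n : K} {Wg : Perm α → K}
    (h : IsWeingarten n Wg) {σ : Perm α} (hσ : ncycles σ = 1) {m : ℕ}
    (hm : Fintype.card α = m + 1) :
    (∏ j ∈ Icc (-m : ℤ) m, (n - j)) * Wg σ = (-1) ^ m * catalan m := by
  obtain ⟨x⟩ : Nonempty α := Fintype.card_pos_iff.1 (hm ▸ m.succ_pos)
  have hcard : #(univ.erase x) = m := by rw [card_erase_of_mem (mem_univ x), card_univ, hm]; rfl
  have hfactorial : ((m + 1).factorial : K) ≠ 0 := Nat.cast_ne_zero.2 (Nat.factorial_ne_zero _)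
  have hsum := h.descPochhammer_eval_mul_permSumFunctional_hookSum hcard
  rw [h.permSumFunctional_hookSum hσ x, hm] at hsum
  rw [prod_Icc_sub_eq_descPochhammer_eval]
  exact mul_left_cancel₀ hfactorial (by linear_combination hsum)

end WeingartenFunctional

lemma catalan_ne_zero (m : ℕ) : catalan m ≠ 0 := fun h =>
  m.centralBinom_ne_zero (by rw [← succ_mul_catalan_eq_centralBinom, h, mul_zero])

theorem weingarten_full_cycle_general {K α : Type*} [Field K] [CharZero K] [Fintype α]
    [DecidableEq α] {n : K} {Wg : Perm α → K} (hWg : IsWeingarten n Wg) {σ : Perm α}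
    (hσ : ncycles σ = 1) :
    Wg σ = (-1) ^ (Fintype.card α - 1) * catalan (Fintype.card α - 1) *
      ∏ j ∈ Icc (-(Fintype.card α : ℤ) + 1) (Fintype.card α - 1), (n - j)⁻¹ := by
  obtain ⟨m, hm⟩ : ∃ m, Fintype.card α = m + 1 := Nat.exists_eq_succ_of_ne_zero fun h0 => by
    have := Fintype.card_eq_zero_iff.1 h0
    simp [ncycles, Subsingleton.elim σ 1] at hσ
  have hIcc : Icc (-(Fintype.card α : ℤ) + 1) (Fintype.card α - 1) = Icc (-m : ℤ) m := by
    rw [hm]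
    push_cast
    congr 1 <;> ring
  have hprod := hWg.prod_mul_apply hσ hm
  have hcatalan : (catalan m : K) ≠ 0 := Nat.cast_ne_zero.2 (catalan_ne_zero m)
  have hne : ∏ j ∈ Icc (-m : ℤ) m, (n - j) ≠ 0 := fun h0 => by simp [h0, hcatalan] at hprod
  rw [hIcc, hm, Nat.add_sub_cancel, prod_inv_distrib, eq_mul_inv_iff_mul_eq₀ hne, mul_comm, hprod]

/-- **Value of the Weingarten function at a full cycle.** For `n ≥ d ≥ 1` and the
Weingarten function `Wg(n,·)` on `S_d` (characterized as the convolution inverse of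
`σ ↦ n^{#σ}`), its value at the full cycle `(1,2,…,d)` is
`(−1)^{d−1} c_{d−1} ∏_{j=−(d−1)}^{d−1} (n−j)⁻¹`, where `c_i` is the `i`-th Catalan number. -/
theorem weingarten_full_cycle (d n : ℕ) (hd : 1 ≤ d) (hdn : d ≤ n)
    (Wg : Equiv.Perm (Fin d) → ℝ)
    (hWg : ∀ σ : Equiv.Perm (Fin d),
      ∑ τ : Equiv.Perm (Fin d), Wg τ * (n : ℝ) ^ ncycles (σ * τ⁻¹) =
        if σ = 1 then 1 else 0) :
    Wg (finRotate d) =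
      (-1 : ℝ) ^ (d - 1) * (catalan (d - 1)) *
        ∏ j ∈ Finset.Icc (-(d : ℤ) + 1) ((d : ℤ) - 1), ((n : ℝ) - (j : ℝ))⁻¹ := by
  obtain ⟨m, rfl⟩ := Nat.exists_eq_add_of_le' hd
  simpa only [Fintype.card_fin] using weingarten_full_cycle_general hWg (ncycles_finRotate m)
end
end
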